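/- arXiv:1704.06428 — 2 statements merged into one kernel-verified Lean document; each statement's English description precedes it below -/
import Mathlib

section
/- Let q = dim 𝓧 and let {β^{(1)},…,β^{(q)}} be an orthonormal basis of 𝓧 such that Tβ^{(j)} = ρ_j β^{(j)} with ρ₁ ≥ ρ₂ ≥ ⋯ ≥ ρ_q, and set α^{(j)} = Φ^{−1/2}β^{(j)}. Define C₁ = {α ∈ 𝓧 : Σ_{k=1}^K ⟨α_k, V_k α_k⟩_k = 1} and, for j ≥ 2, C_j = {α ∈ C₁ : Σ_{k=1}^K ⟨α_k^{(r)}, V_k α_k⟩_k = 0 for all r ∈ {1,…,j−1}}. Then for every j ∈ {1,…,q}: (a) α^{(j)} ∈ C_j; (b) E[⟨α, X⟩_𝓧²] ≤ E[⟨α^{(j)}, X⟩_𝓧²] for every α ∈ C_j; and (c) ρ_j = ⟨β^{(j)}, Tβ^{(j)}⟩_𝓧 = φ(α^{(j)}). -/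
open MeasureTheory ContinuousLinearMap Filter
open scoped RealInnerProductSpace Topology NNReal

noncomputable section
open scoped Classical

/-- The rank-one operator `x ⊗ y : h ↦ ⟨x, h⟩ y`. -/
def tens {F G : Type*} [NormedAddCommGroup F] [InnerProductSpace ℝ F]
    [NormedAddCommGroup G] [NormedSpace ℝ G] (x : F) (y : G) : F →L[ℝ] G :=
  (innerSL ℝ x).smulRight y

variable {K : ℕ}

/-- The canonical projection `τ_k : 𝓧 → 𝓧_k`, where `𝓧 = 𝓧₁ × ⋯ × 𝓧_K` carries the
inner product `⟨α, β⟩ = Σ_k ⟨α_k, β_k⟩` (realized as `PiLp 2 𝓧`). -/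
def tau (𝓧 : Fin K → Type*) [∀ k, NormedAddCommGroup (𝓧 k)]
    [∀ k, InnerProductSpace ℝ (𝓧 k)] (k : Fin K) : PiLp 2 𝓧 →L[ℝ] 𝓧 k :=
  PiLp.proj 2 𝓧 k

variable {𝓧 : Fin K → Type*} [∀ k, NormedAddCommGroup (𝓧 k)]
  [∀ k, InnerProductSpace ℝ (𝓧 k)] [∀ k, FiniteDimensional ℝ (𝓧 k)]
variable {Ω : Type*} [MeasurableSpace Ω]

/-- The covariance operator `V_{kℓ} = E[X_ℓ ⊗ X_k] : 𝓧_ℓ → 𝓧_k` (a Bochner integral). -/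
def Vcov (P : Measure Ω) (X : Ω → PiLp 2 𝓧) (k l : Fin K) : 𝓧 l →L[ℝ] 𝓧 k :=
  ∫ ω, tens (tau 𝓧 l (X ω)) (tau 𝓧 k (X ω)) ∂P

/-- `Φ = Σ_k τ_k* V_k τ_k`. -/
def PhiOp (P : Measure Ω) (X : Ω → PiLp 2 𝓧) : PiLp 2 𝓧 →L[ℝ] PiLp 2 𝓧 :=
  ∑ k, ContinuousLinearMap.adjoint (tau 𝓧 k) ∘L Vcov P X k k ∘L tau 𝓧 k

/-- `Ψ = Σ_{k≠ℓ} τ_k* V_{kℓ} τ_ℓ`. -/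
def PsiOp (P : Measure Ω) (X : Ω → PiLp 2 𝓧) : PiLp 2 𝓧 →L[ℝ] PiLp 2 𝓧 :=
  ∑ k, ∑ l, if l = k then 0 else
    ContinuousLinearMap.adjoint (tau 𝓧 k) ∘L Vcov P X k l ∘L tau 𝓧 l

/-- `S` is the inverse of the positive square root of `A` (i.e. `S = A^{-1/2}`):
`S` is positive (hence self-adjoint) and `S ∘ S` is a two-sided inverse of `A`. -/
def IsInvSqrt {F : Type*} [NormedAddCommGroup F] [InnerProductSpace ℝ F]
    [CompleteSpace F] (A S : F →L[ℝ] F) : Prop :=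
  S.IsPositive ∧ (S ∘L S) ∘L A = 1 ∧ A ∘L (S ∘L S) = 1

/-- `φ(α) = Σ_{k≠ℓ} ⟨α_k, V_{kℓ} α_ℓ⟩`. -/
def phiForm (P : Measure Ω) (X : Ω → PiLp 2 𝓧) (a : PiLp 2 𝓧) : ℝ :=
  ∑ k, ∑ l, if l = k then 0 else ⟪tau 𝓧 k a, Vcov P X k l (tau 𝓧 l a)⟫

theorem aux_integrable (P : Measure Ω)
    (X : Ω → PiLp 2 𝓧) (hXmeas : AEStronglyMeasurable X P)
    (hX2 : Integrable (fun ω => ‖X ω‖ ^ 2) P) (k l : Fin K) :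
    Integrable (fun ω => tens (tau 𝓧 l (X ω)) (tau 𝓧 k (X ω))) P := by
  have hm : ∀ k, AEStronglyMeasurable (fun ω => tau 𝓧 k (X ω)) P := fun k =>
    (tau 𝓧 k).continuous.comp_aestronglyMeasurable hXmeas
  refine Integrable.mono' hX2 ?_ ?_
  · have h1 : AEStronglyMeasurable (fun ω => innerSL ℝ (tau 𝓧 l (X ω))) P :=
      (innerSL ℝ (E := 𝓧 l)).continuous.comp_aestronglyMeasurable (hm l)
    have hc : Continuous (fun p : (𝓧 l →L[ℝ] ℝ) × 𝓧 k => p.1.smulRight p.2) :=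
      (ContinuousLinearMap.smulRightL ℝ (𝓧 l) (𝓧 k)).continuous₂
    exact hc.comp_aestronglyMeasurable (h1.prodMk (hm k))
  · refine Eventually.of_forall fun ω => ?_
    have hle : ∀ k, ‖tau 𝓧 k (X ω)‖ ≤ ‖X ω‖ := fun k => PiLp.norm_apply_le (X ω) k
    have : ‖tens (tau 𝓧 l (X ω)) (tau 𝓧 k (X ω))‖
        = ‖tau 𝓧 l (X ω)‖ * ‖tau 𝓧 k (X ω)‖ := by
      simp [tens, ContinuousLinearMap.norm_smulRight_apply]
    rw [this, sq]
    exact mul_le_mul (hle l) (hle k) (norm_nonneg _) (norm_nonneg _)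

theorem aux_inner_V (P : Measure Ω)
    (X : Ω → PiLp 2 𝓧) (hXmeas : AEStronglyMeasurable X P)
    (hX2 : Integrable (fun ω => ‖X ω‖ ^ 2) P) (k l : Fin K) (a : 𝓧 k) (b : 𝓧 l) :
    Integrable (fun ω => ⟪a, tau 𝓧 k (X ω)⟫ * ⟪b, tau 𝓧 l (X ω)⟫) P ∧
    ⟪a, Vcov P X k l b⟫ = ∫ ω, ⟪a, tau 𝓧 k (X ω)⟫ * ⟪b, tau 𝓧 l (X ω)⟫ ∂P := by
  have hi := aux_integrable P X hXmeas hX2 k l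
  have hi2 := hi.apply_continuousLinearMap b
  have hi3 := hi2.const_inner (𝕜 := ℝ) a
  have he : ∀ ω, ⟪a, tens (tau 𝓧 l (X ω)) (tau 𝓧 k (X ω)) b⟫
      = ⟪a, tau 𝓧 k (X ω)⟫ * ⟪b, tau 𝓧 l (X ω)⟫ := by
    intro ω
    simp [tens, inner_smul_right, real_inner_comm, mul_comm]
  constructor
  · exact hi3.congr (Eventually.of_forall he)
  · rw [Vcov, ContinuousLinearMap.integral_apply hi, ← integral_inner hi2]
    exact integral_congr_ae (Eventually.of_forall he)

theorem aux_sq (P : Measure Ω)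
    (X : Ω → PiLp 2 𝓧) (hXmeas : AEStronglyMeasurable X P)
    (hX2 : Integrable (fun ω => ‖X ω‖ ^ 2) P) (a : PiLp 2 𝓧) :
    ∫ ω, ⟪a, X ω⟫ ^ 2 ∂P =
      (∑ k, ⟪tau 𝓧 k a, Vcov P X k k (tau 𝓧 k a)⟫) + phiForm P X a := by
  have h1 : ∀ ω, ⟪a, X ω⟫ ^ 2 = ∑ k, ∑ l,
      ⟪tau 𝓧 k a, tau 𝓧 k (X ω)⟫ * ⟪tau 𝓧 l a, tau 𝓧 l (X ω)⟫ := by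
    intro ω
    rw [PiLp.inner_apply, sq, Finset.sum_mul_sum]
    rfl
  have h2 : ∫ ω, ⟪a, X ω⟫ ^ 2 ∂P = ∑ k, ∑ l, ⟪tau 𝓧 k a, Vcov P X k l (tau 𝓧 l a)⟫ := by
    simp_rw [h1]
    rw [integral_finsetSum _ fun k _ => integrable_finsetSum _ fun l _ =>
      (aux_inner_V P X hXmeas hX2 k l _ _).1]
    refine Finset.sum_congr rfl fun k _ => ?_
    rw [integral_finsetSum _ fun l _ => (aux_inner_V P X hXmeas hX2 k l _ _).1]
    exact Finset.sum_congr rfl fun l _ => (aux_inner_V P X hXmeas hX2 k l _ _).2.symm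
  rw [h2, phiForm, ← Finset.sum_add_distrib]
  refine Finset.sum_congr rfl fun k _ => ?_
  rw [← Finset.add_sum_erase _ _ (Finset.mem_univ k)]
  congr 1
  rw [← Finset.add_sum_erase Finset.univ (fun l => if l = k then (0:ℝ) else _)
    (Finset.mem_univ k)]
  simp only [if_true, zero_add]
  refine Finset.sum_congr rfl fun l hl => ?_
  rw [if_neg (Finset.ne_of_mem_erase hl)]

theorem aux_Phi (P : Measure Ω) (X : Ω → PiLp 2 𝓧) (a b : PiLp 2 𝓧) :
    ∑ k, ⟪tau 𝓧 k a, Vcov P X k k (tau 𝓧 k b)⟫ = ⟪a, PhiOp P X b⟫ := by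
  simp only [PhiOp, ContinuousLinearMap.sum_apply, inner_sum, ContinuousLinearMap.comp_apply,
    ContinuousLinearMap.adjoint_inner_right]

theorem aux_Psi (P : Measure Ω) (X : Ω → PiLp 2 𝓧) (a : PiLp 2 𝓧) :
    phiForm P X a = ⟪a, PsiOp P X a⟫ := by
  simp only [PsiOp, phiForm, ContinuousLinearMap.sum_apply, inner_sum]
  refine Finset.sum_congr rfl fun k _ => Finset.sum_congr rfl fun l _ => ?_
  split_ifs
  · simp
  · simp only [ContinuousLinearMap.comp_apply, ContinuousLinearMap.adjoint_inner_right]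

/-- If `{β^{(1)},…,β^{(q)}}` (here `b`) is an orthonormal basis of `𝓧`
consisting of eigenvectors of `T = Φ^{-1/2} Ψ Φ^{-1/2}` with eigenvalues in nonincreasing
order, and `α^{(j)} = Φ^{-1/2} β^{(j)}`, then each `α^{(j)}` lies in the constraint set `C_j`,
maximizes `E[⟨α, X⟩²]` over `C_j`, and `ρ_j = ⟨β^{(j)}, Tβ^{(j)}⟩ = φ(α^{(j)})`. -/
theorem stmt_3 (hK : 2 ≤ K) (P : Measure Ω) [IsProbabilityMeasure P]
    (X : Ω → PiLp 2 𝓧) (hXmeas : AEStronglyMeasurable X P)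
    (hX2 : Integrable (fun ω => ‖X ω‖ ^ 2) P)
    (hX0 : ∫ ω, X ω ∂P = 0)
    (hVunit : ∀ k, IsUnit (Vcov P X k k))
    (Φis : PiLp 2 𝓧 →L[ℝ] PiLp 2 𝓧) (hΦis : IsInvSqrt (PhiOp P X) Φis)
    (b : OrthonormalBasis (Fin (Module.finrank ℝ (PiLp 2 𝓧))) ℝ (PiLp 2 𝓧))
    (ρ : Fin (Module.finrank ℝ (PiLp 2 𝓧)) → ℝ)
    (hEig : ∀ j, (Φis ∘L PsiOp P X ∘L Φis) (b j) = ρ j • b j)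
    (hMono : Antitone ρ) :
    ∀ j,
      (∑ k, ⟪tau 𝓧 k (Φis (b j)), Vcov P X k k (tau 𝓧 k (Φis (b j)))⟫ = 1) ∧
      (∀ r, r < j → ∑ k, ⟪tau 𝓧 k (Φis (b r)), Vcov P X k k (tau 𝓧 k (Φis (b j)))⟫ = 0) ∧
      (∀ a : PiLp 2 𝓧,
        (∑ k, ⟪tau 𝓧 k a, Vcov P X k k (tau 𝓧 k a)⟫ = 1) →
        (∀ r, r < j → ∑ k, ⟪tau 𝓧 k (Φis (b r)), Vcov P X k k (tau 𝓧 k a)⟫ = 0) →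
        ∫ ω, ⟪a, X ω⟫ ^ 2 ∂P ≤ ∫ ω, ⟪Φis (b j), X ω⟫ ^ 2 ∂P) ∧
      ρ j = ⟪b j, (Φis ∘L PsiOp P X ∘L Φis) (b j)⟫ ∧
      ρ j = phiForm P X (Φis (b j)) := by
  obtain ⟨hpos, hL, hR⟩ := hΦis
  have hL' : ∀ x, Φis (Φis (PhiOp P X x)) = x := fun x => DFunLike.congr_fun hL x
  have hR' : ∀ x, PhiOp P X (Φis (Φis x)) = x := fun x => DFunLike.congr_fun hR x
  have hsym : ∀ x y, ⟪Φis x, y⟫ = ⟪x, Φis y⟫ := fun x y => hpos.isSymmetric x y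
  have hcomm : ∀ x, PhiOp P X (Φis x) = Φis (PhiOp P X x) := fun x => by
    conv_lhs => rw [← hL' x]
    rw [hR']
  have hSPS : ∀ x, Φis (PhiOp P X (Φis x)) = x := fun x => by rw [← hcomm, hR']
  have hΦ : ∀ x y, ⟪Φis x, PhiOp P X (Φis y)⟫ = ⟪x, y⟫ := fun x y => by rw [hsym, hSPS]
  have hΨ : ∀ x, phiForm P X (Φis x) = ⟪x, (Φis ∘L PsiOp P X ∘L Φis) x⟫ := fun x => by
    rw [aux_Psi, hsym]; rfl
  have hon := b.orthonormal
  have hρ : ∀ j, ρ j = ⟪b j, (Φis ∘L PsiOp P X ∘L Φis) (b j)⟫ := fun j => by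
    rw [hEig, inner_smul_right, real_inner_self_eq_norm_sq, hon.1 j]; simp
  intro j
  have hone : ∑ k, ⟪tau 𝓧 k (Φis (b j)), Vcov P X k k (tau 𝓧 k (Φis (b j)))⟫ = 1 := by
    rw [aux_Phi, hΦ, real_inner_self_eq_norm_sq, hon.1 j]; simp
  refine ⟨hone, ?_, ?_, hρ j, by rw [hΨ, ← hρ]⟩
  · intro r hr
    rw [aux_Phi, hΦ]
    exact hon.2 hr.ne
  · intro a ha1 ha2
    rw [aux_sq P X hXmeas hX2, aux_sq P X hXmeas hX2, ha1, hone, hΨ, ← hρ]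
    obtain ⟨c, rfl⟩ : ∃ c, a = Φis c := ⟨Φis (PhiOp P X a), (hL' a).symm⟩
    rw [aux_Phi, hΦ] at ha1
    have hc0 : ∀ r, r < j → ⟪b r, c⟫ = 0 := fun r hr => by
      have := ha2 r hr
      rwa [aux_Phi, hΦ] at this
    rw [hΨ]
    generalize (Φis ∘L PsiOp P X ∘L Φis) = T at hEig
    have hT : T c = ∑ i, ⟪b i, c⟫ • ρ i • b i := by
      conv_lhs => rw [← b.sum_repr' c]
      simp [map_sum, hEig]
    have h1 : ⟪c, T c⟫ = ∑ i, ρ i * ⟪b i, c⟫ ^ 2 := by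
      rw [hT, inner_sum]
      refine Finset.sum_congr rfl fun i _ => ?_
      rw [inner_smul_right, inner_smul_right, real_inner_comm]
      ring
    have h2 : ∑ i, ⟪b i, c⟫ ^ 2 = 1 := by
      rw [← ha1, ← b.sum_inner_mul_inner c c]
      refine Finset.sum_congr rfl fun i _ => ?_
      rw [real_inner_comm c (b i), sq]
    have h3 : ∑ i, ρ i * ⟪b i, c⟫ ^ 2 ≤ ρ j := by
      calc ∑ i, ρ i * ⟪b i, c⟫ ^ 2 ≤ ∑ i, ρ j * ⟪b i, c⟫ ^ 2 := by
            refine Finset.sum_le_sum fun i _ => ?_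
            rcases lt_or_ge i j with h | h
            · simp [hc0 i h]
            · exact mul_le_mul_of_nonneg_right (hMono h) (sq_nonneg _)
        _ = ρ j := by rw [← Finset.mul_sum, h2, mul_one]
    rw [h1]
    linarith
end
end

section
/- Suppose K = 2 and set S = V₁^{−1/2} V₁₂ V₂^{−1/2} : 𝓧₂ → 𝓧₁. Let ρ ≠ 0 and x₁ ∈ 𝓧₁ with x₁ ≠ 0 satisfy S S* x₁ = ρ² x₁, and set x₂ = ρ^{−1} S* x₁ and x = τ₁* x₁ + τ₂* x₂. Then T x = ρ x, and moreover ‖x₁‖₁ = ‖x₂‖₂ = ‖x‖_𝓧 / √2. -/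
open MeasureTheory ContinuousLinearMap Filter
open scoped RealInnerProductSpace Topology NNReal

noncomputable section
open scoped Classical

variable {K : ℕ}

variable {𝓧 : Fin K → Type*} [∀ k, NormedAddCommGroup (𝓧 k)]
  [∀ k, InnerProductSpace ℝ (𝓧 k)] [∀ k, FiniteDimensional ℝ (𝓧 k)]
variable {Ω : Type*} [MeasurableSpace Ω]

lemma tau_adj_apply {K : ℕ} {𝓧 : Fin K → Type*} [∀ k, NormedAddCommGroup (𝓧 k)]
    [∀ k, InnerProductSpace ℝ (𝓧 k)] [∀ k, FiniteDimensional ℝ (𝓧 k)] (k l : Fin K) (y : 𝓧 k) :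
    tau 𝓧 l (ContinuousLinearMap.adjoint (tau 𝓧 k) y) = (Pi.single k y : ∀ k, 𝓧 k) l := by
  have h : ContinuousLinearMap.adjoint (tau 𝓧 k) y = WithLp.toLp 2 (Pi.single k y) := by
    refine ext_inner_right ℝ fun v => ?_
    rw [ContinuousLinearMap.adjoint_inner_left, PiLp.inner_apply]
    rw [Finset.sum_eq_single k]
    · simp [tau]
    · intro b _ hb
      simp [Pi.single_eq_of_ne hb]
    · simp
  rw [h]
  simp [tau]

lemma tau_adj_same {K : ℕ} {𝓧 : Fin K → Type*} [∀ k, NormedAddCommGroup (𝓧 k)]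
    [∀ k, InnerProductSpace ℝ (𝓧 k)] [∀ k, FiniteDimensional ℝ (𝓧 k)] (k : Fin K) (y : 𝓧 k) :
    tau 𝓧 k (ContinuousLinearMap.adjoint (tau 𝓧 k) y) = y := by
  rw [tau_adj_apply, Pi.single_eq_same]

lemma tau_adj_ne {K : ℕ} {𝓧 : Fin K → Type*} [∀ k, NormedAddCommGroup (𝓧 k)]
    [∀ k, InnerProductSpace ℝ (𝓧 k)] [∀ k, FiniteDimensional ℝ (𝓧 k)] {k l : Fin K}
    (h : l ≠ k) (y : 𝓧 k) :
    tau 𝓧 l (ContinuousLinearMap.adjoint (tau 𝓧 k) y) = 0 := by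
  rw [tau_adj_apply, Pi.single_eq_of_ne h]

lemma tau_ext {K : ℕ} {𝓧 : Fin K → Type*} [∀ k, NormedAddCommGroup (𝓧 k)]
    [∀ k, InnerProductSpace ℝ (𝓧 k)] {u v : PiLp 2 𝓧}
    (h : ∀ j, tau 𝓧 j u = tau 𝓧 j v) : u = v :=
  PiLp.ext h

/-- Uniqueness of positive square roots in finite dimension. -/
lemma pos_sqrt_unique {F : Type*} [NormedAddCommGroup F] [InnerProductSpace ℝ F]
    [FiniteDimensional ℝ F] (A B : F →L[ℝ] F) (hA : A.IsPositive) (hB : B.IsPositive)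
    (h : A ∘L A = B ∘L B) : A = B := by
  have hs : ((A - B : F →L[ℝ] F) : F →ₗ[ℝ] F).IsSymmetric := by
    intro u v
    have h1 := hA.isSymmetric u v
    have h2 := hB.isSymmetric u v
    simp only [ContinuousLinearMap.coe_coe] at h1 h2
    simp [inner_sub_left, inner_sub_right, h1, h2]
  have key : ∀ (μ : ℝ) (v : F), A v - B v = μ • v → μ • v = 0 := by
    intro μ v hv
    have hav : 0 ≤ ⟪A v, v⟫ := hA.inner_nonneg_left v
    have hbv : 0 ≤ ⟪B v, v⟫ := hB.inner_nonneg_left v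
    have e0 : ⟪A (A v), v⟫ = ⟪B (B v), v⟫ := by
      have := congrArg (fun f => f v) h
      simp only [ContinuousLinearMap.comp_apply] at this
      rw [this]
    have e1 : ⟪A (A v), v⟫ = ⟪A v, A v⟫ := hA.isSymmetric (A v) v
    have e2 : ⟪B (B v), v⟫ = ⟪B v, B v⟫ := hB.isSymmetric (B v) v
    have e3 : A v = B v + μ • v := by rw [← hv]; abel
    have e4 : ⟪A v, A v⟫ - ⟪B v, B v⟫ = μ * (⟪A v, v⟫ + ⟪B v, v⟫) := by
      have : μ * (⟪A v, v⟫ + ⟪B v, v⟫) = ⟪A v + B v, A v - B v⟫ := by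
        rw [hv, inner_smul_right, inner_add_left]
      rw [this, inner_add_left, inner_sub_right, inner_sub_right, real_inner_comm (A v) (B v)]
      ring
    have e5 : μ * ⟪v, v⟫ = ⟪A v, v⟫ - ⟪B v, v⟫ := by
      rw [← inner_sub_left, hv, inner_smul_left]; simp
    have e6 : μ * (⟪A v, v⟫ + ⟪B v, v⟫) = 0 := by rw [← e4]; linarith
    rcases mul_eq_zero.1 e6 with h0 | h0
    · simp [h0]
    · have : μ * ⟪v, v⟫ = 0 := by rw [e5]; linarith
      rcases mul_eq_zero.1 this with h1 | h1
      · simp [h1]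
      · rw [inner_self_eq_zero.1 h1]; simp
  have h0 : ((A - B : F →L[ℝ] F) : F →ₗ[ℝ] F) = 0 := by
    refine (hs.eigenvectorBasis rfl).toBasis.ext fun i => ?_
    have := hs.apply_eigenvectorBasis rfl i
    simp only [OrthonormalBasis.coe_toBasis, LinearMap.zero_apply]
    rw [this]
    exact key _ _ (by simpa using this)
  ext v
  have := congrArg (fun f => f v) h0
  simpa [sub_eq_zero] using this

lemma Vcov_adjoint {K : ℕ} {𝓧 : Fin K → Type*} [∀ k, NormedAddCommGroup (𝓧 k)]
    [∀ k, InnerProductSpace ℝ (𝓧 k)] [∀ k, FiniteDimensional ℝ (𝓧 k)]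
    {Ω : Type*} [MeasurableSpace Ω] (P : Measure Ω) (X : Ω → PiLp 2 𝓧) (k l : Fin K) :
    ContinuousLinearMap.adjoint (Vcov P X k l) = Vcov P X l k := by
  let L : (𝓧 l →L[ℝ] 𝓧 k) ≃ₗᵢ[ℝ] (𝓧 k →L[ℝ] 𝓧 l) :=
    { toFun := fun A => ContinuousLinearMap.adjoint A
      invFun := fun A => ContinuousLinearMap.adjoint A
      map_add' := fun A B => map_add _ A B
      map_smul' := fun c A => by simp
      left_inv := fun A => by simp
      right_inv := fun A => by simp
      norm_map' := fun A => LinearIsometryEquiv.norm_map _ A }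
  have h := L.toContinuousLinearEquiv.integral_comp_comm (μ := P)
    (fun ω => tens (tau 𝓧 l (X ω)) (tau 𝓧 k (X ω)))
  change _ = ContinuousLinearMap.adjoint (Vcov P X k l) at h
  rw [← h]
  unfold Vcov
  congr 1
  funext ω
  change ContinuousLinearMap.adjoint _ = _
  symm
  rw [ContinuousLinearMap.eq_adjoint_iff]
  intro u v
  simp [tens, inner_smul_left, inner_smul_right, real_inner_comm]
  try ring

lemma phi_is_eq {𝓨 : Fin 2 → Type*} [∀ k, NormedAddCommGroup (𝓨 k)]
    [∀ k, InnerProductSpace ℝ (𝓨 k)] [∀ k, FiniteDimensional ℝ (𝓨 k)]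
    {Ω : Type*} [MeasurableSpace Ω] (P : Measure Ω) (X : Ω → PiLp 2 𝓨)
    (Vis : ∀ k, 𝓨 k →L[ℝ] 𝓨 k) (hVis : ∀ k, IsInvSqrt (Vcov P X k k) (Vis k))
    (Φis : PiLp 2 𝓨 →L[ℝ] PiLp 2 𝓨) (hΦis : IsInvSqrt (PhiOp P X) Φis) :
    Φis = ∑ k, ContinuousLinearMap.adjoint (tau 𝓨 k) ∘L Vis k ∘L tau 𝓨 k := by
  have h01 : (0 : Fin 2) ≠ 1 := by decide
  have hpos : (∑ k, ContinuousLinearMap.adjoint (tau 𝓨 k) ∘L Vis k ∘L tau 𝓨 k).IsPositive := by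
    rw [Fin.sum_univ_two]
    exact ((hVis 0).1.adjoint_conj _).add ((hVis 1).1.adjoint_conj _)
  refine pos_sqrt_unique _ _ hΦis.1 hpos ?_
  have hV : ∀ k (y : 𝓨 k), Vcov P X k k (Vis k (Vis k y)) = y := fun k y => by
    simpa using congrArg (fun f => f y) (hVis k).2.2
  have hD : PhiOp P X ∘L ((∑ k, ContinuousLinearMap.adjoint (tau 𝓨 k) ∘L Vis k ∘L tau 𝓨 k) ∘L
      (∑ k, ContinuousLinearMap.adjoint (tau 𝓨 k) ∘L Vis k ∘L tau 𝓨 k)) = 1 := by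
    apply ContinuousLinearMap.ext
    intro v
    simp only [PhiOp, Fin.sum_univ_two, ContinuousLinearMap.comp_apply,
      ContinuousLinearMap.add_apply, map_add, tau_adj_same, tau_adj_ne h01, tau_adj_ne h01.symm,
      map_zero, add_zero, zero_add, hV, ContinuousLinearMap.one_apply]
    refine tau_ext ?_
    rw [Fin.forall_fin_two]
    constructor <;>
      simp only [map_add, tau_adj_same, tau_adj_ne h01, tau_adj_ne h01.symm, add_zero, zero_add]
  generalize (∑ k, ContinuousLinearMap.adjoint (tau 𝓨 k) ∘L Vis k ∘L tau 𝓨 k) = D at hD ⊢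
  generalize PhiOp P X = A at hD hΦis
  have h1 : (Φis ∘L Φis) * A = 1 := hΦis.2.1
  have h2 : A * (D ∘L D) = 1 := hD
  exact left_inv_eq_right_inv h1 h2

/-- When `K = 2`, with `S = V₁^{-1/2} V₁₂ V₂^{-1/2}`: if `ρ ≠ 0`,
`x₁ ≠ 0` satisfies `S S* x₁ = ρ² x₁`, and `x₂ = ρ⁻¹ S* x₁`, `x = τ₁* x₁ + τ₂* x₂`,
then `T x = ρ x` and `‖x₁‖ = ‖x₂‖ = ‖x‖ / √2`. -/
theorem stmt_8 {𝓨 : Fin 2 → Type*} [∀ k, NormedAddCommGroup (𝓨 k)]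
    [∀ k, InnerProductSpace ℝ (𝓨 k)] [∀ k, FiniteDimensional ℝ (𝓨 k)]
    (P : Measure Ω) [IsProbabilityMeasure P]
    (X : Ω → PiLp 2 𝓨) (hXmeas : AEStronglyMeasurable X P)
    (hX2 : Integrable (fun ω => ‖X ω‖ ^ 2) P)
    (hX0 : ∫ ω, X ω ∂P = 0)
    (hVunit : ∀ k, IsUnit (Vcov P X k k))
    (Vis : ∀ k, 𝓨 k →L[ℝ] 𝓨 k) (hVis : ∀ k, IsInvSqrt (Vcov P X k k) (Vis k))
    (Φis : PiLp 2 𝓨 →L[ℝ] PiLp 2 𝓨) (hΦis : IsInvSqrt (PhiOp P X) Φis)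
    (S : 𝓨 1 →L[ℝ] 𝓨 0) (hS : S = Vis 0 ∘L Vcov P X 0 1 ∘L Vis 1)
    (ρ : ℝ) (hρ : ρ ≠ 0) (x₁ : 𝓨 0) (hx₁ : x₁ ≠ 0)
    (hEig : (S ∘L ContinuousLinearMap.adjoint S) x₁ = ρ ^ 2 • x₁)
    (x₂ : 𝓨 1) (hx₂ : x₂ = ρ⁻¹ • ContinuousLinearMap.adjoint S x₁)
    (x : PiLp 2 𝓨)
    (hx : x = ContinuousLinearMap.adjoint (tau 𝓨 0) x₁ +
      ContinuousLinearMap.adjoint (tau 𝓨 1) x₂) :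
    (Φis ∘L PsiOp P X ∘L Φis) x = ρ • x ∧
    ‖x₁‖ = ‖x‖ / Real.sqrt 2 ∧ ‖x₂‖ = ‖x‖ / Real.sqrt 2 := by
  have h01 : (0 : Fin 2) ≠ 1 := by decide
  have hSadj : ContinuousLinearMap.adjoint S = Vis 1 ∘L Vcov P X 1 0 ∘L Vis 0 := by
    rw [hS, ContinuousLinearMap.adjoint_comp, ContinuousLinearMap.adjoint_comp, Vcov_adjoint,
      (hVis 0).1.isSelfAdjoint.adjoint_eq, (hVis 1).1.isSelfAdjoint.adjoint_eq]
    rfl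
  have hS2 : S x₂ = ρ • x₁ := by
    rw [hx₂, map_smul]
    have : S (ContinuousLinearMap.adjoint S x₁) = ρ ^ 2 • x₁ := hEig
    rw [this, smul_smul]
    congr 1
    field_simp
  have hS1 : ContinuousLinearMap.adjoint S x₁ = ρ • x₂ := by
    rw [hx₂, smul_smul, mul_inv_cancel₀ hρ, one_smul]
  have hn : ‖x₁‖ = ‖x₂‖ := by
    have h : ⟪S x₂, x₁⟫ = ⟪x₂, ContinuousLinearMap.adjoint S x₁⟫ :=
      (ContinuousLinearMap.adjoint_inner_right S x₂ x₁).symm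
    rw [hS1, hS2, real_inner_smul_left, real_inner_smul_right, real_inner_self_eq_norm_sq,
      real_inner_self_eq_norm_sq] at h
    have h := mul_left_cancel₀ hρ h
    exact (sq_eq_sq₀ (norm_nonneg _) (norm_nonneg _)).1 h
  have t0 : tau 𝓨 0 x = x₁ := by
    rw [hx, map_add, tau_adj_same, tau_adj_ne h01, add_zero]
  have t1 : tau 𝓨 1 x = x₂ := by
    rw [hx, map_add, tau_adj_same, tau_adj_ne h01.symm, zero_add]
  have hxn : ‖x‖ = Real.sqrt 2 * ‖x₁‖ := by
    rw [PiLp.norm_eq_of_L2, Fin.sum_univ_two]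
    have e0 : x 0 = x₁ := t0
    have e1 : x 1 = x₂ := t1
    rw [e0, e1, ← hn, ← two_mul, Real.sqrt_mul (by norm_num), Real.sqrt_sq (norm_nonneg _)]
  have hs2 : Real.sqrt 2 ≠ 0 := by positivity
  have hfin : ‖x₁‖ = ‖x‖ / Real.sqrt 2 := by
    rw [hxn]; field_simp
  refine ⟨?_, hfin, hn ▸ hfin⟩
  have a1 : Vis 1 (Vcov P X 1 0 (Vis 0 x₁)) = ρ • x₂ := by
    rw [← hS1, hSadj]; rfl
  have a2 : Vis 0 (Vcov P X 0 1 (Vis 1 x₂)) = ρ • x₁ := by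
    rw [← hS2, hS]; rfl
  rw [phi_is_eq P X Vis hVis Φis hΦis]
  simp only [PsiOp, Fin.sum_univ_two, ContinuousLinearMap.comp_apply, if_true, h01, h01.symm,
    if_false, add_zero, zero_add, t0, t1,
    ContinuousLinearMap.add_apply, map_add, tau_adj_same, tau_adj_ne h01, tau_adj_ne h01.symm,
    map_zero, a1, a2]
  rw [hx]
  simp only [map_smul, smul_add]
  rw [add_comm]
end
end
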